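/- Let (R,B) be a single unicast EIC problem, i.e., every row of R has exactly one nonzero entry and every column of R has exactly one nonzero entry (so n = m), and let G be its problem graph. Then the minimum length of a centralized linear broadcast solution equals the minrank: (C)_{(R,B)} = minrk_2(G). -/

import Mathlib

open Matrix BigOperators

namespace EIC

variable {n m : ℕ}

/-- The vertex set of the problem graph of the EIC problem `(R, B)`:
one vertex for each requirement pair `(u, a)` with `R u a = 1`. -/
abbrev Vtx (R : Matrix (Fin n) (Fin m) (ZMod 2)) : Type :=
  {p : Fin n × Fin m // R p.1 p.2 = 1}

/-- `(R, B)` have disjoint supports: no position has both `B = 1` and `R = 1`. -/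
def DisjointSupports (R B : Matrix (Fin n) (Fin m) (ZMod 2)) : Prop :=
  ∀ u a, ¬(B u a = 1 ∧ R u a = 1)

/-- The standard basis vector `e_a ∈ F_2^m`. -/
def e (m : ℕ) (a : Fin m) : Fin m → ZMod 2 := Pi.single a 1

/-- `β` (with rows indexed by `ι`) is a centralized linear broadcast solution to `(R, B)`:
for every requirement pair `(u, a)` there is `α` with `e_a = α · [β ; diag(B_u)]`. -/
def IsCentralizedSolution (R B : Matrix (Fin n) (Fin m) (ZMod 2))
    {ι : Type} [Fintype ι] (β : Matrix ι (Fin m) (ZMod 2)) : Prop :=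
  ∀ u a, R u a = 1 →
    ∃ α : ι ⊕ Fin m → ZMod 2,
      e m a = α ᵥ* Matrix.fromRows β (Matrix.diagonal (B u))

/-- `(C)_{(R,B)}`: the minimum length of a centralized linear broadcast solution. -/
noncomputable def Copt (R B : Matrix (Fin n) (Fin m) (ZMod 2)) : ℕ :=
  sInf {h | ∃ β : Matrix (Fin h) (Fin m) (ZMod 2), IsCentralizedSolution R B β}

/-- The vertical concatenation of the matrices `β u`, `u ∈ [n]`. -/
def vconcat {h : Fin n → ℕ} (β : ∀ u : Fin n, Matrix (Fin (h u)) (Fin m) (ZMod 2)) :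
    Matrix ((ℓ : Fin n) × Fin (h ℓ)) (Fin m) (ZMod 2) :=
  Matrix.of fun p => β p.1 p.2

/-- `β⁽¹⁾, …, β⁽ⁿ⁾` is a (decentralized) linear broadcast solution to `(R, B)`. -/
def IsBroadcastSolution (R B : Matrix (Fin n) (Fin m) (ZMod 2))
    {h : Fin n → ℕ} (β : ∀ u : Fin n, Matrix (Fin (h u)) (Fin m) (ZMod 2)) : Prop :=
  (∀ u a, B u a = 0 → ∀ i, β u i a = 0) ∧
  ∀ u a, R u a = 1 →
    ∃ α : ((ℓ : Fin n) × Fin (h ℓ)) ⊕ Fin m → ZMod 2,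
      e m a = α ᵥ* Matrix.fromRows (vconcat β) (Matrix.diagonal (B u))

/-- `(D)_{(R,B)}`: the minimum length of a decentralized linear broadcast solution. -/
noncomputable def Dopt (R B : Matrix (Fin n) (Fin m) (ZMod 2)) : ℕ :=
  sInf {s | ∃ (h : Fin n → ℕ) (β : ∀ u : Fin n, Matrix (Fin (h u)) (Fin m) (ZMod 2)),
    IsBroadcastSolution R B β ∧ ∑ u, h u = s}

/-- A task-based solution: a linear broadcast solution where every requirement pair
`(u, a)` can be decoded from the broadcast of a single responsible sender `ℓ`. -/
def IsTaskBased (R B : Matrix (Fin n) (Fin m) (ZMod 2))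
    {h : Fin n → ℕ} (β : ∀ u : Fin n, Matrix (Fin (h u)) (Fin m) (ZMod 2)) : Prop :=
  IsBroadcastSolution R B β ∧
  ∀ u a, R u a = 1 → ∃ ℓ : Fin n, ∃ α : Fin (h ℓ) ⊕ Fin m → ZMod 2,
    e m a = α ᵥ* Matrix.fromRows (β ℓ) (Matrix.diagonal (B u))

/-- `(T)_{(R,B)}`: the minimum length of a task-based solution. -/
noncomputable def Topt (R B : Matrix (Fin n) (Fin m) (ZMod 2)) : ℕ :=
  sInf {s | ∃ (h : Fin n → ℕ) (β : ∀ u : Fin n, Matrix (Fin (h u)) (Fin m) (ZMod 2)),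
    IsTaskBased R B β ∧ ∑ u, h u = s}

/-- The edge relation of the problem graph: for distinct requirement pairs `(u,a)`, `(w,b)`,
there is an edge from `v_{(u,a)}` to `v_{(w,b)}` iff `B u b = 1` or `a = b`. -/
def probEdge (R B : Matrix (Fin n) (Fin m) (ZMod 2)) (v w : Vtx R) : Prop :=
  v ≠ w ∧ (B v.1.1 w.1.2 = 1 ∨ v.1.2 = w.1.2)

/-- A matrix `A` fits a directed graph with edge relation `E`. -/
def Fits {V : Type} (E : V → V → Prop) (A : Matrix V V (ZMod 2)) : Prop :=
  (∀ k, A k k = 1) ∧ ∀ k l, k ≠ l → ¬ E k l → A k l = 0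

/-- `minrk₂`: the minimum `F₂`-rank of a matrix fitting the graph. -/
noncomputable def minrk {V : Type} [Fintype V] (E : V → V → Prop) : ℕ :=
  sInf {r | ∃ A : Matrix V V (ZMod 2), Fits E A ∧ A.rank = r}

/-- `rminrk₂`: the minimum `F₂`-rank of a matrix in `𝒜` fitting the graph. -/
noncomputable def rminrk {V : Type} [Fintype V] (E : V → V → Prop)
    (𝒜 : Set (Matrix V V (ZMod 2))) : ℕ :=
  sInf {r | ∃ A ∈ 𝒜, Fits E A ∧ A.rank = r}

/-- The column repetition function `φ_{(R,B)}`: the column of `φ(A)` indexed by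
`v_{(u,a)}` is the `a`-th column of `A`. -/
def phi (R : Matrix (Fin n) (Fin m) (ZMod 2))
    (A : Matrix (Vtx R) (Fin m) (ZMod 2)) : Matrix (Vtx R) (Vtx R) (ZMod 2) :=
  Matrix.of fun k v => A k v.1.2

/-- The sender neighborhood `N_u = {v_{(w,b)} ∈ V : B u b = 1}`. -/
def senderNbhd (R B : Matrix (Fin n) (Fin m) (ZMod 2)) (u : Fin n) : Set (Vtx R) :=
  {v | B u v.1.2 = 1}

/-- A neighborhood partition `{Ñ_1, …, Ñ_n}`. -/
def IsNbhdPartition (R B : Matrix (Fin n) (Fin m) (ZMod 2))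
    (N : Fin n → Set (Vtx R)) : Prop :=
  (∀ i, N i ⊆ senderNbhd R B i) ∧
  (∀ i j, i ≠ j → Disjoint (N i) (N j)) ∧
  (⋃ i, N i) = Set.univ

open Classical in
/-- `R^(i)`: the request matrix of the EIC subproblem induced by `Ñ_i`; it has ones
exactly at the requirement pairs whose vertex lies in `Ñ_i`. -/
noncomputable def Rsub (R : Matrix (Fin n) (Fin m) (ZMod 2))
    (N : Fin n → Set (Vtx R)) (i : Fin n) : Matrix (Fin n) (Fin m) (ZMod 2) :=
  Matrix.of fun u a =>
    if hr : R u a = 1 then (if (⟨(u, a), hr⟩ : Vtx R) ∈ N i then 1 else 0) else 0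

open Classical in
/-- `B^(i)`: the has-matrix of the EIC subproblem induced by `Ñ_i`; it agrees with `B`
on the columns of blocks requested in `Ñ_i` and is zero elsewhere. -/
noncomputable def Bsub (R B : Matrix (Fin n) (Fin m) (ZMod 2))
    (N : Fin n → Set (Vtx R)) (i : Fin n) : Matrix (Fin n) (Fin m) (ZMod 2) :=
  Matrix.of fun u a => if ∃ v ∈ N i, v.1.2 = a then B u a else 0

/-- `Cl` is a clique for the edge relation `E`. -/
def IsClique {V : Type} (E : V → V → Prop) (Cl : Set V) : Prop :=
  ∀ k ∈ Cl, ∀ l ∈ Cl, k ≠ l → E k l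

/-- `I` is an independent set for the edge relation `E` (no edge in either direction). -/
def IsIndep {V : Type} (E : V → V → Prop) (I : Set V) : Prop :=
  ∀ k ∈ I, ∀ l ∈ I, k ≠ l → ¬ E k l ∧ ¬ E l k

/-- `χ(Ḡ|_S)`: the minimum number of cliques of the induced subgraph `G|_S`
needed to partition `S`. -/
noncomputable def cliqueCoverNum {V : Type} (E : V → V → Prop) (S : Set V) : ℕ :=
  sInf {t | ∃ Cl : Fin t → Set V, (∀ i, Cl i ⊆ S) ∧ (∀ i, IsClique E (Cl i)) ∧
    (∀ i j, i ≠ j → Disjoint (Cl i) (Cl j)) ∧ (⋃ i, Cl i) = S}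

/-- `χ(G)`: the minimum number of independent sets of `G` needed to partition
its vertex set. -/
noncomputable def chromNum {V : Type} [Fintype V] (E : V → V → Prop) : ℕ :=
  sInf {t | ∃ I : Fin t → Set V, (∀ i, IsIndep E (I i)) ∧
    (∀ i j, i ≠ j → Disjoint (I i) (I j)) ∧ (⋃ i, I i) = Set.univ}

/-- `ω(Ḡ|_S)`: the maximum size of an independent set of the induced subgraph `G|_S`. -/
noncomputable def indepNum {V : Type} (E : V → V → Prop) (S : Set V) : ℕ :=
  sSup {t | ∃ I ⊆ S, IsIndep E I ∧ I.ncard = t}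

/-- The set of neighborhood-cliques: vertex sets of maximal cliques of the induced
subgraphs `G|_{N_i}`, over all senders `i`. -/
def nbhdCliques (R B : Matrix (Fin n) (Fin m) (ZMod 2)) : Set (Set (Vtx R)) :=
  {Cl | ∃ i : Fin n, Cl ⊆ senderNbhd R B i ∧ IsClique (probEdge R B) Cl ∧
    ∀ Cl', Cl ⊆ Cl' → Cl' ⊆ senderNbhd R B i → IsClique (probEdge R B) Cl' → Cl' = Cl}

/-!
Node `u` can cancel from the broadcast exactly the blocks it has, so a broadcast `β` serves the
requirement pair `(u, a)` iff some combination of the rows of `β` agrees with `e_a` on the blocks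
that `u` lacks. Stacking one such combination per requirement pair gives a matrix `M` of rank at
most the length of `β`; conversely, a rank factorization `M = C * β` of any matrix whose rows have
this property yields a solution of length `rank M`. Repeating the columns of `M` by `φ` turns the
condition on its rows into the condition that `φ(M)` fits the problem graph, whence
`(C) = rminrk₂(G, im φ)` for every EIC problem. If no block is requested twice, then no column is
repeated, every matrix lies in the image of `φ`, and the restricted minrank is the minrank.
-/

section LinearAlgebra

variable {K ι κ ν : Type*}

theorem exists_rank_factorization [Field K] [Finite ι] [Fintype κ] (A : Matrix ι κ K) :
    ∃ (C : Matrix ι (Fin A.rank) K) (D : Matrix (Fin A.rank) κ K), A = C * D := by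
  let b := Module.finBasisOfFinrankEq K (Submodule.span K (Set.range A.row))
    A.rank_eq_finrank_span_row.symm
  let rowInSpan (k : ι) : Submodule.span K (Set.range A.row) :=
    ⟨A.row k, Submodule.subset_span (Set.mem_range_self k)⟩
  refine ⟨of fun k i => b.repr (rowInSpan k) i, of fun i => b i, ?_⟩
  ext k l
  calc A k l = (rowInSpan k : κ → K) l := rfl
    _ = ((∑ i, b.repr (rowInSpan k) i • b i :) : κ → K) l := by rw [b.sum_repr]
    _ = _ := by
      simp only [Submodule.coe_sum, Submodule.coe_smul, Finset.sum_apply, Pi.smul_apply,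
        smul_eq_mul, Matrix.mul_apply, of_apply]

theorem rank_le_rank_of_col_mem_span [Field K] [Finite ι] [Fintype κ] [Fintype ν]
    {A : Matrix ι κ K} {A' : Matrix ι ν K}
    (h : ∀ j, A.col j ∈ Submodule.span K (Set.range A'.col)) : A.rank ≤ A'.rank := by
  rw [A.rank_eq_finrank_span_cols, A'.rank_eq_finrank_span_cols]
  exact Submodule.finrank_mono (Submodule.span_le.2 (Set.range_subset_iff.2 h))

theorem exists_eq_vecMul_fromRows_diagonal_iff [DivisionRing K] [Fintype ι] [Fintype κ]
    [DecidableEq κ] (β : Matrix ι κ K) (d x : κ → K) :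
    (∃ α, x = α ᵥ* Matrix.fromRows β (Matrix.diagonal d)) ↔
      ∃ c : ι → K, ∀ b, d b = 0 → (c ᵥ* β) b = x b := by
  constructor
  · rintro ⟨α, rfl⟩
    refine ⟨α ∘ Sum.inl, fun b hb => ?_⟩
    rw [vecMul_fromRows, Pi.add_apply, vecMul_diagonal, hb, mul_zero, add_zero]
  · rintro ⟨c, hc⟩
    refine ⟨Sum.elim c fun b => (x b - (c ᵥ* β) b) / d b, funext fun b => ?_⟩
    rw [sumElim_vecMul_fromRows, Pi.add_apply, vecMul_diagonal]
    by_cases hb : d b = 0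
    · rw [hb, mul_zero, add_zero, hc b hb]
    · rw [div_mul_cancel₀ _ hb, add_sub_cancel]

end LinearAlgebra

theorem ne_one_iff_eq_zero {x : ZMod 2} : x ≠ 1 ↔ x = 0 := by
  decide +revert

section Decoding

variable {R B : Matrix (Fin n) (Fin m) (ZMod 2)} {M : Matrix (Vtx R) (Fin m) (ZMod 2)}

/-- `M` is a decoding matrix for `(R, B)`: its row at a requirement pair `(u, a)` agrees with
`e_a` on the blocks that `u` does not have. Such a row is what `u` needs to receive in order to
recover block `a`. -/
def IsDecodingMatrix (R B : Matrix (Fin n) (Fin m) (ZMod 2))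
    (M : Matrix (Vtx R) (Fin m) (ZMod 2)) : Prop :=
  ∀ (k : Vtx R) (b : Fin m), B k.1.1 b = 0 → M k b = e m k.1.2 b

theorem isCentralizedSolution_iff_exists_isDecodingMatrix_mul {ι : Type} [Fintype ι]
    {β : Matrix ι (Fin m) (ZMod 2)} :
    IsCentralizedSolution R B β ↔
      ∃ C : Matrix (Vtx R) ι (ZMod 2), IsDecodingMatrix R B (C * β) := by
  simp only [IsCentralizedSolution, exists_eq_vecMul_fromRows_diagonal_iff]
  constructor
  · intro h
    choose C hC using fun k : Vtx R => h k.1.1 k.1.2 k.2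
    exact ⟨of C, hC⟩
  · rintro ⟨C, hC⟩ u a hua
    exact ⟨C ⟨(u, a), hua⟩, hC ⟨(u, a), hua⟩⟩

theorem IsDecodingMatrix.fits_phi (hM : IsDecodingMatrix R B M) (hdisj : DisjointSupports R B) :
    Fits (probEdge R B) (phi R M) := by
  refine ⟨fun k => ?_, fun k l hkl hedge => ?_⟩
  · have hlacks : B k.1.1 k.1.2 = 0 := ne_one_iff_eq_zero.1 fun hB => hdisj _ _ ⟨hB, k.2⟩
    simpa [phi, e] using hM k k.1.2 hlacks
  · have hlacks : B k.1.1 l.1.2 = 0 := ne_one_iff_eq_zero.1 fun hB => hedge ⟨hkl, .inl hB⟩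
    have hblock : l.1.2 ≠ k.1.2 := fun h => hedge ⟨hkl, .inr h.symm⟩
    simpa [phi, e, hblock] using hM k l.1.2 hlacks

theorem apply_eq_of_fits_phi (hM : Fits (probEdge R B) (phi R M)) (k l : Vtx R)
    (hlacks : B k.1.1 l.1.2 = 0) : M k l.1.2 = e m k.1.2 l.1.2 := by
  by_cases hblock : l.1.2 = k.1.2
  · simpa [phi, e, hblock] using hM.1 k
  · have hkl : k ≠ l := fun h => hblock (h ▸ rfl)
    have hedge : ¬ probEdge R B k l := by
      rintro ⟨-, hB | h⟩
      · exact ne_one_iff_eq_zero.2 hlacks hB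
      · exact hblock h.symm
    simpa [phi, e, hblock] using hM.2 k l hkl hedge

theorem rank_phi_le : (phi R M).rank ≤ M.rank :=
  M.rank_submatrix_le id fun v : Vtx R => v.1.2

-- `φ` forgets the columns of `M` at blocks nobody requests, so these may be taken to be zero.
theorem exists_isDecodingMatrix_rank_le_rank_phi (hM : Fits (probEdge R B) (phi R M)) :
    ∃ M', IsDecodingMatrix R B M' ∧ M'.rank ≤ (phi R M).rank := by
  classical
  let M' : Matrix (Vtx R) (Fin m) (ZMod 2) :=
    of fun k b => if ∃ v : Vtx R, v.1.2 = b then M k b else 0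
  have requested (v k : Vtx R) : M' k v.1.2 = M k v.1.2 := if_pos ⟨v, rfl⟩
  have unrequested {b : Fin m} (hb : ¬∃ v : Vtx R, v.1.2 = b) (k : Vtx R) : M' k b = 0 := if_neg hb
  refine ⟨M', fun k b hlacks => ?_, rank_le_rank_of_col_mem_span fun b => ?_⟩
  · by_cases hb : ∃ v : Vtx R, v.1.2 = b
    · obtain ⟨v, rfl⟩ := hb
      rw [requested, apply_eq_of_fits_phi hM k v hlacks]
    · have hne : b ≠ k.1.2 := fun h => hb ⟨k, h.symm⟩
      simp [unrequested hb, e, hne]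
  · by_cases hb : ∃ v : Vtx R, v.1.2 = b
    · obtain ⟨v, rfl⟩ := hb
      exact Submodule.subset_span ⟨v, funext fun k => (requested v k).symm⟩
    · have hcol : M'.col b = 0 := funext (unrequested hb)
      exact hcol ▸ Submodule.zero_mem _

end Decoding

theorem Copt_eq_rminrk_range_phi {R B : Matrix (Fin n) (Fin m) (ZMod 2)}
    (hdisj : DisjointSupports R B) :
    Copt R B = rminrk (probEdge R B) (Set.range (phi R)) := by
  apply csInf_eq_csInf_of_forall_exists_le
  · rintro h ⟨β, hβ⟩
    obtain ⟨C, hC⟩ := isCentralizedSolution_iff_exists_isDecodingMatrix_mul.1 hβ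
    refine ⟨_, ⟨phi R (C * β), Set.mem_range_self _, hC.fits_phi hdisj, rfl⟩, ?_⟩
    calc (phi R (C * β)).rank ≤ (C * β).rank := rank_phi_le
      _ ≤ β.rank := rank_mul_le_right C β
      _ ≤ h := β.rank_le_height
  · rintro _ ⟨_, ⟨M, rfl⟩, hM, rfl⟩
    obtain ⟨M', hM', hrank⟩ := exists_isDecodingMatrix_rank_le_rank_phi hM
    obtain ⟨C, β, hCβ⟩ := exists_rank_factorization M'
    have hβ : IsCentralizedSolution R B β :=
      isCentralizedSolution_iff_exists_isDecodingMatrix_mul.2 ⟨C, hCβ ▸ hM'⟩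
    exact ⟨M'.rank, ⟨β, hβ⟩, hrank⟩

theorem phi_surjective {R : Matrix (Fin n) (Fin m) (ZMod 2)}
    (hcol : ∀ a, {u | R u a = 1}.Subsingleton) : Function.Surjective (phi R) := by
  have block_injective : Function.Injective fun v : Vtx R => v.1.2 := by
    rintro ⟨⟨u, a⟩, hu⟩ ⟨⟨w, _⟩, hw⟩ rfl
    exact Subtype.ext (Prod.ext (hcol a hu hw) rfl)
  intro A
  refine ⟨of fun k => Function.extend (fun v : Vtx R => v.1.2) (A k) 0, ?_⟩
  ext k v
  exact block_injective.extend_apply (A k) 0 v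

theorem rminrk_univ {V : Type} [Fintype V] (E : V → V → Prop) :
    rminrk E Set.univ = minrk E := by
  simp only [rminrk, minrk, Set.mem_univ, true_and]

theorem single_unicast_centralized_eq_minrk_general {n m : ℕ}
    (R B : Matrix (Fin n) (Fin m) (ZMod 2)) (hdisj : DisjointSupports R B)
    (hcol : ∀ a, {u | R u a = 1}.Subsingleton) :
    Copt R B = minrk (probEdge R B) := by
  rw [Copt_eq_rminrk_range_phi hdisj, (phi_surjective hcol).range_eq, rminrk_univ]

theorem single_unicast_centralized_eq_minrk {n m : ℕ}
    (R B : Matrix (Fin n) (Fin m) (ZMod 2)) (hdisj : DisjointSupports R B)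
    (hrow : ∀ u, ∃! a, R u a = 1) (hcol : ∀ a, ∃! u, R u a = 1) :
    Copt R B = minrk (probEdge R B) :=
  single_unicast_centralized_eq_minrk_general R B hdisj fun a _ hu _ hw => (hcol a).unique hu hw

end EIC
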